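/- Symmetry of the energy–momentum tensor at the level of cycles: fix n ≥ 2. For μ, ν ∈ {0,1} set G_{μν} := (ē₁ − (−1)^ν·e₁) · ( (−1)^{μ+n}·Π·∏_{a=1}^{n−1} A_a^{2a−1} + ∏_{a=1}^{n−1} A_a^{2a+1} ). Then for all μ, ν ∈ {0,1}, Asym(G_{μν}) − Asym(G_{νμ}) ∈ K. -/

import Mathlib

open Finset Equiv

/-- The polynomial ring `ℂ[A₁,…,A_{n−1}, B₁,…,B_{2n}]`. -/
abbrev PolyRing (n : ℕ) := MvPolynomial (Fin (n - 1) ⊕ Fin (2 * n)) ℂ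

/-- The field `F = ℂ(A₁,…,A_{n−1}, B₁,…,B_{2n})` of rational functions. -/
abbrev RatField (n : ℕ) := FractionRing (PolyRing n)

/-- The variable `A_a` (indexed from `0`) inside `F`. -/
noncomputable def Av (n : ℕ) (a : Fin (n - 1)) : RatField n :=
  algebraMap (PolyRing n) (RatField n) (MvPolynomial.X (Sum.inl a))

/-- The variable `B_j` (indexed from `0`) inside `F`. -/
noncomputable def Bv (n : ℕ) (j : Fin (2 * n)) : RatField n :=
  algebraMap (PolyRing n) (RatField n) (MvPolynomial.X (Sum.inr j))

/-- The field automorphism of `F` substituting `A_a ↦ A_{σ(a)}` (fixing the `B`'s). -/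
noncomputable def permA (n : ℕ) (σ : Equiv.Perm (Fin (n - 1))) :
    RatField n ≃+* RatField n :=
  IsFractionRing.ringEquivOfRingEquiv
    ((MvPolynomial.renameEquiv ℂ (Equiv.sumCongr σ (Equiv.refl (Fin (2 * n))))).toRingEquiv)

/-- Antisymmetrization over the `A`-variables:
`Asym f := ∑_{σ ∈ S_{n−1}} sgn(σ)·f(A_{σ(1)},…,A_{σ(n−1)})`. -/
noncomputable def Asym (n : ℕ) (x : RatField n) : RatField n :=
  ∑ σ : Equiv.Perm (Fin (n - 1)), ((Equiv.Perm.sign σ : ℤ) : RatField n) * permA n σ x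

/-- `Θ̂₊(x) := ∏_{j=1}^{2n}(1 + x·B_j⁻¹)`. -/
noncomputable def ThetaP (n : ℕ) (x : RatField n) : RatField n :=
  ∏ j, (1 + x * (Bv n j)⁻¹)

/-- `Θ̂₋(x) := ∏_{j=1}^{2n}(1 − x·B_j⁻¹)`. -/
noncomputable def ThetaM (n : ℕ) (x : RatField n) : RatField n :=
  ∏ j, (1 - x * (Bv n j)⁻¹)

/-- `Ξ̂¹(x) := Θ̂₊(x) − Θ̂₋(x)`. -/
noncomputable def Xi1 (n : ℕ) (x : RatField n) : RatField n :=
  ThetaP n x - ThetaM n x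

/-- `Ξ̂²(x,y) := (Θ̂₊(x)Θ̂₊(y) − Θ̂₋(x)Θ̂₋(y))·(x−y)/(x+y) + Θ̂₊(x)Θ̂₋(y) − Θ̂₋(x)Θ̂₊(y)`. -/
noncomputable def Xi2 (n : ℕ) (x y : RatField n) : RatField n :=
  (ThetaP n x * ThetaP n y - ThetaM n x * ThetaM n y) * (x - y) / (x + y) +
    ThetaP n x * ThetaM n y - ThetaM n x * ThetaP n y

/-- The subfield `𝔹 = ℂ(B₁,…,B_{2n}) ⊆ F`. -/
noncomputable def BField (n : ℕ) : Subfield (RatField n) :=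
  Subfield.closure
    (Set.range (fun c : ℂ => algebraMap (PolyRing n) (RatField n) (MvPolynomial.C c)) ∪
      Set.range (Bv n))

/-- The `𝔹`-submodule `K ⊆ F` spanned by the antisymmetrized deformed cycles
`Asym(Ξ̂¹(A₁)·∏_{a=2}^{n−1} A_a^{r_a})` and
`Asym(Ξ̂²(A₁,A₂)·∏_{a=3}^{n−1} A_a^{r_a})` with `0 ≤ r_a ≤ 2n−1`. -/
noncomputable def Kspan (n : ℕ) : Submodule (BField n) (RatField n) :=
  Submodule.span (BField n)
    ({x | ∃ (h : 0 < n - 1) (r : Fin (n - 1) → ℕ), (∀ a, r a ≤ 2 * n - 1) ∧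
        x = Asym n (Xi1 n (Av n ⟨0, h⟩) *
          ∏ a ∈ Finset.univ.filter (fun a : Fin (n - 1) => 0 < (a : ℕ)),
            (Av n a) ^ (r a))} ∪
     {x | ∃ (h : 1 < n - 1) (r : Fin (n - 1) → ℕ), (∀ a, r a ≤ 2 * n - 1) ∧
        x = Asym n (Xi2 n (Av n ⟨0, by omega⟩) (Av n ⟨1, h⟩) *
          ∏ a ∈ Finset.univ.filter (fun a : Fin (n - 1) => 1 < (a : ℕ)),
            (Av n a) ^ (r a))})

/-- `e₁ = ∑_j B_j`. -/
noncomputable def eOne (n : ℕ) : RatField n := ∑ j, Bv n j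

/-- `ē₁ = ∑_j B_j⁻¹`. -/
noncomputable def eBarOne (n : ℕ) : RatField n := ∑ j, (Bv n j)⁻¹

/-- `Π = ∏_j B_j`. -/
noncomputable def PiB (n : ℕ) : RatField n := ∏ j, Bv n j

/-- The cycle `G_{μν} = (ē₁ − (−1)^ν·e₁)·((−1)^{μ+n}·Π·∏_{a=1}^{n−1} A_a^{2a−1}
  + ∏_{a=1}^{n−1} A_a^{2a+1})` of the energy–momentum tensor. -/
noncomputable def Gcyc (n : ℕ) (μ ν : Fin 2) : RatField n :=
  (eBarOne n - (-1 : RatField n) ^ (ν : ℕ) * eOne n) *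
    ((-1 : RatField n) ^ ((μ : ℕ) + n) * PiB n *
        (∏ a : Fin (n - 1), (Av n a) ^ (2 * (a : ℕ) + 1)) +
      ∏ a : Fin (n - 1), (Av n a) ^ (2 * (a : ℕ) + 3))

/-!
Write `e_k` for the elementary symmetric functions of the `B_j⁻¹` and `M₁ = ∏ A_a^{2a-1}`,
`M₃ = ∏ A_a^{2a+1}`. The polynomial `Ξ̂¹(A) = 2 ∑_{l<n} e_{2l+1} A^{2l+1}` is odd, so in
`Asym(Ξ̂¹(A₁) A₂³ A₃⁵ ⋯)` every term whose exponent of `A₁` is one of `3, 5, …, 2n-3` vanishes.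
What survives is `2 e_1 Asym M₁` and, after a cyclic permutation of the exponents,
`2 (-1)^n e_{2n-1} Asym M₃`. Since `e_1 = ē₁` and `Π e_{2n-1} = e₁`, the difference
`Asym G_{μν} - Asym G_{νμ}` is a multiple of this element of `K`.
-/

section ElementarySymmetric

variable {σ R : Type*}

lemma prod_one_add_mul_eq_sum_esymm [CommSemiring R] (s : Finset σ) (f : σ → R) (x : R) :
    ∏ i ∈ s, (1 + x * f i) = ∑ k ∈ range (#s + 1), (s.val.map f).esymm k * x ^ k := by
  rw [prod_one_add, sum_powerset]
  refine sum_congr rfl fun k _ => ?_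
  rw [esymm_map_val, sum_mul]
  refine sum_congr rfl fun t ht => ?_
  rw [prod_mul_distrib, prod_const, (mem_powersetCard.1 ht).2, mul_comm]

lemma sum_range_one_sub_neg_one_pow_mul [Ring R] (c : ℕ → R) (n : ℕ) :
    ∑ k ∈ range (2 * n + 1), (1 - (-1) ^ k) * c k = 2 * ∑ l ∈ range n, c (2 * l + 1) := by
  induction n with
  | zero => simp
  | succ n ih =>
    rw [show 2 * (n + 1) + 1 = 2 * n + 1 + 1 + 1 by rfl, sum_range_succ, sum_range_succ, ih,
      sum_range_succ, (odd_two_mul_add_one n).neg_one_pow,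
      Even.neg_one_pow (n := 2 * n + 1 + 1) ⟨n + 1, by ring⟩]
    noncomm_ring

lemma prod_one_add_sub_prod_one_sub [CommRing R] {s : Finset σ} {n : ℕ} (hs : #s = 2 * n)
    (f : σ → R) (x : R) :
    ∏ i ∈ s, (1 + x * f i) - ∏ i ∈ s, (1 - x * f i) =
      2 * ∑ l ∈ range n, (s.val.map f).esymm (2 * l + 1) * x ^ (2 * l + 1) := by
  have h_minus : ∏ i ∈ s, (1 - x * f i) = ∏ i ∈ s, (1 + -x * f i) :=
    prod_congr rfl fun _ _ => by ring
  rw [h_minus, prod_one_add_mul_eq_sum_esymm, prod_one_add_mul_eq_sum_esymm, hs,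
    ← sum_range_one_sub_neg_one_pow_mul fun k => (s.val.map f).esymm k * x ^ k,
    ← sum_sub_distrib]
  refine sum_congr rfl fun k _ => ?_
  rw [neg_pow]
  ring

lemma prod_mul_esymm_inv [Field R] {s : Finset σ} {f : σ → R} (hf : ∀ i ∈ s, f i ≠ 0) {k : ℕ}
    (hk : k ≤ #s) :
    (∏ i ∈ s, f i) * (s.val.map fun i => (f i)⁻¹).esymm k = (s.val.map f).esymm (#s - k) := by
  classical
  rw [esymm_map_val, esymm_map_val, mul_sum]
  refine sum_bij' (fun t _ => s \ t) (fun t _ => s \ t) ?_ ?_ ?_ ?_ fun t ht => ?_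
  · grind [card_sdiff_of_subset]
  · grind [card_sdiff_of_subset]
  · grind
  · grind
  · have hts : t ⊆ s := (mem_powersetCard.1 ht).1
    have h_cancel : ∏ i ∈ t, f i ≠ 0 := prod_ne_zero_iff.2 fun i hi => hf i (hts hi)
    rw [← prod_sdiff hts, prod_inv_distrib, mul_assoc, mul_inv_cancel₀ h_cancel, mul_one]

lemma esymm_map_val_one [CommSemiring R] (s : Finset σ) (f : σ → R) :
    (s.val.map f).esymm 1 = ∑ i ∈ s, f i := by
  simp [esymm_map_val, powersetCard_one]

end ElementarySymmetric

section Alternant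

variable {ι R : Type*} [Fintype ι] [DecidableEq ι] [CommRing R]

/-- The alternant (generalized Vandermonde determinant) `det (x_i ^ {r_j})` of the points `x` with
exponents `r`. It is the antisymmetrization of the monomial `∏ x_i ^ {r_i}`. -/
def alternant (x : ι → R) (r : ι → ℕ) : R :=
  (Matrix.of fun i j => x i ^ r j).det

lemma alternant_comp_perm (x : ι → R) (r : ι → ℕ) (σ : Perm ι) :
    alternant x (r ∘ σ) = Perm.sign σ * alternant x r :=
  Matrix.det_permute' σ (Matrix.of fun i j => x i ^ r j)

lemma alternant_eq_zero_of_eq (x : ι → R) {r : ι → ℕ} {i j : ι} (hij : i ≠ j)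
    (hr : r i = r j) : alternant x r = 0 :=
  Matrix.det_zero_of_column_eq hij fun k => by simp [hr]

end Alternant

section OddExponents

variable {p : ℕ} [NeZero p]

/-- The exponents `(k, 3, 5, …, 2p - 1)`: the odd numbers with the first one replaced by `k`. -/
def oddExponents (p : ℕ) [NeZero p] (k : ℕ) : Fin p → ℕ :=
  Function.update (fun a => 2 * (a : ℕ) + 1) 0 k

lemma oddExponents_one : oddExponents p 1 = fun a : Fin p => 2 * (a : ℕ) + 1 :=
  Function.update_eq_self_iff.2 (by simp)

lemma oddExponents_comp_finRotate :
    oddExponents p (2 * p + 1) ∘ finRotate p = fun a : Fin p => 2 * (a : ℕ) + 3 := by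
  obtain ⟨m, rfl⟩ := Nat.exists_eq_succ_of_ne_zero (NeZero.ne p)
  funext a
  rcases eq_or_ne a (Fin.last m) with rfl | ha
  · rw [Function.comp_apply, finRotate_last, oddExponents, Function.update_self, Fin.val_last]
    omega
  · have h_val : (finRotate (m + 1) a : ℕ) = a + 1 := coe_finRotate_of_ne_last ha
    have h_ne : finRotate (m + 1) a ≠ 0 := by
      rw [← Fin.val_ne_zero_iff, h_val]
      exact Nat.succ_ne_zero a
    rw [Function.comp_apply, oddExponents, Function.update_of_ne h_ne, h_val]
    ring

lemma prod_pow_oddExponents {M : Type*} [CommMonoid M] (x : Fin p → M) (k : ℕ) :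
    ∏ a, x a ^ oddExponents p k a =
      x 0 ^ k * ∏ a ∈ univ.filter (fun a : Fin p => 0 < (a : ℕ)), x a ^ (2 * (a : ℕ) + 1) := by
  have h_filter : univ.filter (fun a : Fin p => 0 < (a : ℕ)) = {0}ᶜ := by
    ext a
    simp [Nat.pos_iff_ne_zero]
  rw [Fintype.prod_eq_mul_prod_compl 0, h_filter, oddExponents, Function.update_self]
  congr 1
  exact prod_congr rfl fun a ha => by rw [Function.update_of_ne (by simpa using ha)]

variable {R : Type*} [CommRing R]

lemma alternant_oddExponents_eq_zero (x : Fin p → R) {l : ℕ} (hl : 0 < l) (hlp : l < p) :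
    alternant x (oddExponents p (2 * l + 1)) = 0 := by
  have h_ne : (⟨l, hlp⟩ : Fin p) ≠ 0 := by simpa [Fin.ext_iff] using hl.ne'
  exact alternant_eq_zero_of_eq x h_ne (by simp [oddExponents, h_ne])

lemma alternant_oddExponents_last (x : Fin p → R) :
    alternant x (oddExponents p (2 * p + 1)) =
      (-1) ^ (p + 1) * alternant x fun a => 2 * (a : ℕ) + 3 := by
  have h_sign : (Perm.sign (finRotate p) : ℤ) = (-1) ^ (p + 1) := by
    rw [sign_finRotate, ← Nat.sub_add_cancel (NeZero.one_le (n := p))]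
    simp [pow_add]
  rw [← oddExponents_comp_finRotate, alternant_comp_perm, h_sign, ← mul_assoc]
  simp [← mul_pow]

lemma sum_mul_alternant_oddExponents (x : Fin p → R) (c : ℕ → R) :
    ∑ l ∈ range (p + 1), c l * alternant x (oddExponents p (2 * l + 1)) =
      c 0 * alternant x (fun a => 2 * (a : ℕ) + 1) +
        (-1) ^ (p + 1) * c p * alternant x fun a => 2 * (a : ℕ) + 3 := by
  have h_first : ∑ l ∈ range p, c l * alternant x (oddExponents p (2 * l + 1)) =
      c 0 * alternant x fun a => 2 * (a : ℕ) + 1 := by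
    rw [sum_eq_single_of_mem 0 (mem_range.2 (NeZero.pos p)), mul_zero, zero_add,
      oddExponents_one]
    intro l hl hl0
    rw [alternant_oddExponents_eq_zero x (Nat.pos_of_ne_zero hl0) (mem_range.1 hl), mul_zero]
  rw [sum_range_succ, h_first, alternant_oddExponents_last]
  ring

end OddExponents

section Antisymmetrization

variable {n : ℕ}

lemma permA_algebraMap (σ : Perm (Fin (n - 1))) (q : PolyRing n) :
    permA n σ (algebraMap (PolyRing n) (RatField n) q) =
      algebraMap (PolyRing n) (RatField n)
        (MvPolynomial.rename (Equiv.sumCongr σ (Equiv.refl (Fin (2 * n)))) q) :=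
  IsFractionRing.ringEquivOfRingEquiv_algebraMap _ _

lemma permA_Av (σ : Perm (Fin (n - 1))) (a : Fin (n - 1)) :
    permA n σ (Av n a) = Av n (σ a) := by
  simp [Av, permA_algebraMap]

lemma permA_of_mem_BField (σ : Perm (Fin (n - 1))) {c : RatField n} (hc : c ∈ BField n) :
    permA n σ c = c := by
  refine RingHom.eqOn_field_closure (f := (permA n σ : RatField n →+* RatField n))
    (g := RingHom.id _) ?_ hc
  rintro _ (⟨z, rfl⟩ | ⟨j, rfl⟩)
  · simp [permA_algebraMap]
  · simp [Bv, permA_algebraMap]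

/-- Antisymmetrization as a `𝔹`-linear map, so that the linearity lemmas of the library apply. -/
noncomputable def asymLinearMap (n : ℕ) : RatField n →ₗ[BField n] RatField n where
  toFun := Asym n
  map_add' x y := by simp only [Asym, map_add, mul_add, sum_add_distrib]
  map_smul' c x := by
    simp only [Asym, Subfield.smul_def, smul_eq_mul, map_mul, permA_of_mem_BField _ c.2,
      mul_sum, mul_left_comm, RingHom.id_apply]

lemma Asym_add (x y : RatField n) : Asym n (x + y) = Asym n x + Asym n y :=
  map_add (asymLinearMap n) x y

lemma Asym_sub (x y : RatField n) : Asym n (x - y) = Asym n x - Asym n y :=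
  map_sub (asymLinearMap n) x y

lemma Asym_sum {ι : Type*} (s : Finset ι) (f : ι → RatField n) :
    Asym n (∑ i ∈ s, f i) = ∑ i ∈ s, Asym n (f i) :=
  map_sum (asymLinearMap n) f s

lemma Asym_mul_of_mem {c : RatField n} (hc : c ∈ BField n) (x : RatField n) :
    Asym n (c * x) = c * Asym n x :=
  map_smul (asymLinearMap n) (⟨c, hc⟩ : BField n) x

lemma Asym_prod_pow (r : Fin (n - 1) → ℕ) :
    Asym n (∏ a, Av n a ^ r a) = alternant (Av n) r := by
  simp [alternant, Matrix.det_apply', Asym, permA_Av]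

end Antisymmetrization

section Scalars

variable {n : ℕ}

lemma Bv_mem_BField (j : Fin (2 * n)) : Bv n j ∈ BField n :=
  Subfield.subset_closure (Or.inr ⟨j, rfl⟩)

lemma Bv_ne_zero (j : Fin (2 * n)) : Bv n j ≠ 0 := by
  simp [Bv]

lemma neg_one_pow_mem_BField (k : ℕ) : (-1 : RatField n) ^ k ∈ BField n :=
  pow_mem (neg_mem (one_mem _)) k

lemma PiB_mem_BField : PiB n ∈ BField n :=
  prod_mem fun j _ => Bv_mem_BField j

lemma eOne_mem_BField : eOne n ∈ BField n :=
  sum_mem fun j _ => Bv_mem_BField j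

lemma eBarOne_mem_BField : eBarOne n ∈ BField n :=
  sum_mem fun j _ => inv_mem (Bv_mem_BField j)

/-- The `k`-th elementary symmetric function of `B₁⁻¹, …, B_{2n}⁻¹`, a coefficient of `Θ̂₊`. -/
noncomputable def esymmInvB (n k : ℕ) : RatField n :=
  ((univ : Finset (Fin (2 * n))).val.map fun j => (Bv n j)⁻¹).esymm k

lemma esymmInvB_mem_BField (k : ℕ) : esymmInvB n k ∈ BField n := by
  rw [esymmInvB, esymm_map_val]
  exact sum_mem fun _ _ => prod_mem fun j _ => inv_mem (Bv_mem_BField j)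

lemma esymmInvB_one : esymmInvB n 1 = eBarOne n :=
  esymm_map_val_one _ _

lemma PiB_mul_esymmInvB_two_mul_sub_one (hn : 0 < n) :
    PiB n * esymmInvB n (2 * n - 1) = eOne n := by
  have h_card : #(univ : Finset (Fin (2 * n))) = 2 * n := card_fin _
  rw [PiB, esymmInvB, prod_mul_esymm_inv (fun j _ => Bv_ne_zero j) (by omega), h_card,
    show 2 * n - (2 * n - 1) = 1 by omega, esymm_map_val_one, eOne]

lemma Xi1_eq_sum (x : RatField n) :
    Xi1 n x = 2 * ∑ l ∈ range n, esymmInvB n (2 * l + 1) * x ^ (2 * l + 1) :=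
  prod_one_add_sub_prod_one_sub (card_fin _) _ x

end Scalars

section Cycles

variable {n : ℕ}

/-- The cycle `Ξ̂¹(A₁) A₂³ A₃⁵ ⋯ A_{n-1}^{2n-3}`, whose antisymmetrization is a generator of `K`. -/
noncomputable def oddXi1Cycle (n : ℕ) [NeZero (n - 1)] : RatField n :=
  Xi1 n (Av n 0) *
    ∏ a ∈ univ.filter (fun a : Fin (n - 1) => 0 < (a : ℕ)), Av n a ^ (2 * (a : ℕ) + 1)

lemma Asym_oddXi1Cycle_mem_Kspan [NeZero (n - 1)] : Asym n (oddXi1Cycle n) ∈ Kspan n :=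
  Submodule.subset_span <| Or.inl
    ⟨NeZero.pos _, fun a => 2 * (a : ℕ) + 1, fun a => by dsimp only; omega, rfl⟩

lemma oddXi1Cycle_eq_sum [NeZero (n - 1)] :
    oddXi1Cycle n = 2 * ∑ l ∈ range n,
      esymmInvB n (2 * l + 1) * ∏ a, Av n a ^ oddExponents (n - 1) (2 * l + 1) a := by
  simp only [oddXi1Cycle, Xi1_eq_sum, prod_pow_oddExponents, mul_assoc, sum_mul]

lemma Asym_oddXi1Cycle [NeZero (n - 1)] :
    Asym n (oddXi1Cycle n) =
      2 * (eBarOne n * Asym n (∏ a, Av n a ^ (2 * (a : ℕ) + 1)) +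
        (-1) ^ n * esymmInvB n (2 * n - 1) * Asym n (∏ a, Av n a ^ (2 * (a : ℕ) + 3))) := by
  have hn : n - 1 + 1 = n := by have := NeZero.pos (n - 1); omega
  have h_sum := sum_mul_alternant_oddExponents (Av n) fun l => esymmInvB n (2 * l + 1)
  rw [hn, mul_zero, zero_add, esymmInvB_one, show 2 * (n - 1) + 1 = 2 * n - 1 by omega] at h_sum
  rw [oddXi1Cycle_eq_sum, Asym_mul_of_mem (ofNat_mem _ 2), Asym_sum]
  simp only [Asym_mul_of_mem (esymmInvB_mem_BField _), Asym_prod_pow, h_sum]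

lemma Gcyc_sub_Gcyc_swap (μ ν : Fin 2) :
    Gcyc n μ ν - Gcyc n ν μ = ((-1) ^ (μ : ℕ) - (-1) ^ (ν : ℕ)) *
      ((-1) ^ n * PiB n * eBarOne n * ∏ a, Av n a ^ (2 * (a : ℕ) + 1) +
        eOne n * ∏ a, Av n a ^ (2 * (a : ℕ) + 3)) := by
  simp only [Gcyc, pow_add]
  ring

lemma Asym_Gcyc_sub_Asym_Gcyc_swap [NeZero (n - 1)] (μ ν : Fin 2) :
    Asym n (Gcyc n μ ν) - Asym n (Gcyc n ν μ) =
      ((-1) ^ (μ : ℕ) - (-1) ^ (ν : ℕ)) * ((-1) ^ n * PiB n / 2) * Asym n (oddXi1Cycle n) := by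
  have h_sign : ((-1) ^ n * (-1) ^ n : RatField n) = 1 := by simp [← mul_pow]
  have hn : 0 < n := by have := NeZero.pos (n - 1); omega
  have h_diff : (-1 : RatField n) ^ (μ : ℕ) - (-1) ^ (ν : ℕ) ∈ BField n :=
    sub_mem (neg_one_pow_mem_BField _) (neg_one_pow_mem_BField _)
  have h_coeff : (-1) ^ n * PiB n * eBarOne n ∈ BField n :=
    mul_mem (mul_mem (neg_one_pow_mem_BField n) PiB_mem_BField) eBarOne_mem_BField
  rw [← Asym_sub, Gcyc_sub_Gcyc_swap, Asym_mul_of_mem h_diff, Asym_add, Asym_mul_of_mem h_coeff,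
    Asym_mul_of_mem eOne_mem_BField, Asym_oddXi1Cycle,
    ← PiB_mul_esymmInvB_two_mul_sub_one hn]
  linear_combination (-((-1) ^ (μ : ℕ) - (-1) ^ (ν : ℕ)) * PiB n * esymmInvB n (2 * n - 1) *
    Asym n (∏ a, Av n a ^ (2 * (a : ℕ) + 3))) * h_sign

end Cycles

/-- Symmetry of the energy–momentum tensor at the level of cycles: for `n ≥ 2`
and `μ, ν ∈ {0,1}`, `Asym(G_{μν}) − Asym(G_{νμ}) ∈ K`. -/
theorem emTensor_symmetric (n : ℕ) (hn : 2 ≤ n) (μ ν : Fin 2) :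
    Asym n (Gcyc n μ ν) - Asym n (Gcyc n ν μ) ∈ Kspan n := by
  have : NeZero (n - 1) := ⟨by omega⟩
  have h_scalar : ((-1) ^ (μ : ℕ) - (-1) ^ (ν : ℕ)) * ((-1) ^ n * PiB n / 2) ∈ BField n :=
    mul_mem (sub_mem (neg_one_pow_mem_BField _) (neg_one_pow_mem_BField _))
      (div_mem (mul_mem (neg_one_pow_mem_BField n) PiB_mem_BField) (ofNat_mem _ 2))
  rw [Asym_Gcyc_sub_Asym_Gcyc_swap]
  exact (Kspan n).smul_mem (⟨_, h_scalar⟩ : BField n) Asym_oddXi1Cycle_mem_Kspan
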